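/- N is an elementary substructure of M if and only if N ⊆ M and there is an ultrafilter U such that the ultrapowers Π_U N and Π_U M are isomorphic via an isomorphism that is the identity on the diagonal image of N. -/

import Mathlib

open FirstOrder

universe u v w

/-!
A substructure `S` of `M` is elementary iff `S` and `M` are elementarily equivalent once every
element of `S` is named by a constant, and an isomorphism of ultrapowers respects these constants
iff it is the identity on the diagonal. It remains to prove the Keisler–Shelah theorem: elementarily
equivalent structures `A` and `B` have isomorphic ultrapowers.

Let `K` be an infinite set into which `A`, `B` and the language embed, with `κ = #K`. On an index
set `I` of cardinality `2 ^ κ` there are `2 ^ 2 ^ κ` independent functions `I → K`. By transfinite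
recursion of that length, match every function `I → A` with a function `I → B` and conversely,
always keeping almost all of the independent functions independent over the filter generated by the
sets where matched tuples satisfy the same formula. To match `a`, note that for each finite set `Φ`
of formulas the tuples matched so far determine, on a set of the filter, a function `g Φ : I → B`
that agrees with `a` about `Φ`; a single unused independent function can play the role of all the
`g Φ` at once. An ultrafilter containing the final filter makes the matching an isomorphism.
-/

universe x

namespace KeislerShelah

open Cardinal Filter Function Set

section TransfiniteConstruction

variable {T J : Type x}

/-- The set built up to stage `j` inclusive when stage `j` enlarges the union of the earlier
stages by means of `next j`. -/
def stage [LinearOrder J] [WellFoundedLT J] (next : J → Set T → Set T) (j : J) : Set T :=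
  next j (⋃ k : Iio j, stage next k)
termination_by wellFounded_lt.wrap j
decreasing_by exact k.2

theorem iUnion_stage_subset [LinearOrder J] [WellFoundedLT J] {next : J → Set T → Set T}
    (subset_next : ∀ j s, s ⊆ next j s) (j : J) : ⋃ k : Iio j, stage next k ⊆ stage next j := by
  rw [stage.eq_def next j]
  exact subset_next j _

theorem monotone_stage [LinearOrder J] [WellFoundedLT J] {next : J → Set T → Set T}
    (subset_next : ∀ j s, s ⊆ next j s) : Monotone (stage next) := by
  refine monotone_iff_forall_lt.2 fun k j hkj => ?_
  exact (subset_iUnion_of_subset ⟨k, hkj⟩ subset_rfl).trans (iUnion_stage_subset subset_next j)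

theorem mk_iUnion_Iio_le [LinearOrder J] {F : J → Set T} {κ : Cardinal.{x}} (hκ : ℵ₀ ≤ κ) {j : J}
    (hF : ∀ k < j, #(F k) ≤ max κ #(Iio k)) : #(⋃ k : Iio j, F k) ≤ max κ #(Iio j) := by
  refine (mk_iUnion_le _).trans (mul_le_of_le (hκ.trans (le_max_left _ _)) (le_max_right _ _)
    (ciSup_le' fun k => (hF k k.2).trans ?_))
  exact max_le_max le_rfl (mk_le_mk_of_subset (Iio_subset_Iio k.2.le))

theorem exists_good_forall_goal {Good : Set T → Prop} {goal : J → Set T} {κ Θ : Cardinal.{x}}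
    (hκ : ℵ₀ ≤ κ) (hκΘ : κ < Θ) (hJ : #J ≤ Θ)
    (good_sUnion : ∀ c, IsChain (· ⊆ ·) c → (∀ s ∈ c, Good s) → Good (⋃₀ c))
    (extend : ∀ s, Good s → #s < Θ → ∀ j,
      ∃ t, s ⊆ t ∧ Good t ∧ (t ∩ goal j).Nonempty ∧ #t ≤ max κ #s) :
    ∃ s, Good s ∧ ∀ j, (s ∩ goal j).Nonempty := by
  obtain ⟨_, _, hord⟩ := Cardinal.exists_ord_eq_type_lt J
  have total : ∀ j s, ∃ t, s ⊆ t ∧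
      (Good s → #s < Θ → Good t ∧ (t ∩ goal j).Nonempty ∧ #t ≤ max κ #s) := by
    intro j s
    by_cases hs : Good s ∧ #s < Θ
    · obtain ⟨t, hst, ht⟩ := extend s hs.1 hs.2 j
      exact ⟨t, hst, fun _ _ => ht⟩
    · exact ⟨s, subset_rfl, fun h₁ h₂ => (hs ⟨h₁, h₂⟩).elim⟩
  choose next subset_next next_spec using total
  have mono := monotone_stage subset_next
  have good_iUnion : ∀ A : Set J, (∀ k ∈ A, Good (stage next k)) →
      Good (⋃ k : A, stage next k) := by
    intro A hA
    rw [← sUnion_range]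
    exact good_sUnion _ (mono.comp (Subtype.mono_coe (· ∈ A))).isChain_range (by simpa using hA)
  have stage_spec : ∀ j, Good (stage next j) ∧ (stage next j ∩ goal j).Nonempty ∧
      #(stage next j) ≤ max κ #(Iio j) := by
    intro j
    induction j using WellFoundedLT.induction with
    | _ j ih =>
    have hcard := mk_iUnion_Iio_le hκ fun k hk => (ih k hk).2.2
    have hlt : #(⋃ k : Iio j, stage next k) < Θ :=
      hcard.trans_lt (max_lt hκΘ ((mk_Iio_lt j hord).trans_le hJ))
    obtain ⟨hgood, hgoal, hle⟩ := next_spec j _ (good_iUnion _ fun k hk => (ih k hk).1) hlt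
    rw [stage.eq_def next j]
    exact ⟨hgood, hgoal, hle.trans (max_le (le_max_left _ _) hcard)⟩
  refine ⟨⋃ k : (univ : Set J), stage next k, good_iUnion univ fun k _ => (stage_spec k).1,
    fun j => (stage_spec j).2.1.mono (inter_subset_inter_left _ ?_)⟩
  exact subset_iUnion_of_subset ⟨j, mem_univ j⟩ subset_rfl

end TransfiniteConstruction

section Independence

variable {I Ξ K : Type x} {f : Ξ → I → K} {S : Set Ξ} {D : Filter I}

/-- The functions `f ξ`, for `ξ ∈ S`, are independent over `D`: prescribing the values of at most
`#K` of them leaves a `D`-positive set of indices. -/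
def IndepOn (f : Ξ → I → K) (S : Set Ξ) (D : Filter I) : Prop :=
  ∀ s ⊆ S, #s ≤ #K → ∀ h : Ξ → K, ∃ᶠ i in D, EqOn (fun ξ => f ξ i) h s

theorem IndepOn.neBot [Nonempty K] (hf : IndepOn f S D) : D.NeBot :=
  ⟨fun hD => by simpa [hD] using hf ∅ (empty_subset S) (by simp) fun _ => Classical.arbitrary K⟩

theorem exists_pairwiseDisjoint_forall_disjoint_eq_empty {α : Type*} (B : Set (Set α)) :
    ∃ P ⊆ B, P.PairwiseDisjoint id ∧ ∀ u ∈ B, Disjoint u (⋃₀ P) → u = ∅ := by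
  obtain ⟨P, hP⟩ := zorn_subset {P : Set (Set α) | P ⊆ B ∧ P.PairwiseDisjoint id} (by
    intro c hc hchain
    refine ⟨⋃₀ c, ⟨sUnion_subset fun s hs => (hc hs).1, ?_⟩, fun s hs => subset_sUnion_of_mem hs⟩
    rw [pairwiseDisjoint_sUnion hchain.directedOn]
    exact fun s hs => (hc hs).2)
  refine ⟨P, hP.prop.1, hP.prop.2, fun u hu hdisj => ?_⟩
  have hmem : u ∈ P := by
    refine hP.le_of_ge (y := insert u P) ⟨insert_subset hu hP.prop.1, ?_⟩ (subset_insert u P)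
      (mem_insert u P)
    exact hP.prop.2.insert fun v hv _ => hdisj.mono_right (subset_sUnion_of_mem hv)
  exact disjoint_self.1 (hdisj.mono_right (subset_sUnion_of_mem hmem))

theorem IndepOn.exists_eqOn_of_pairwise_disjoint [Infinite K] (hf : IndepOn f S D)
    {u : K → Set Ξ} (hu : Pairwise (Disjoint on u)) (huS : ∀ k, u k ⊆ S)
    (huK : ∀ k, #(u k) ≤ #K) (h : K → Ξ → K) (g : I → K) {X : Set I} (hX : X ∈ D) :
    ∃ i ∈ X, EqOn (fun ξ => f ξ i) (h (g i)) (u (g i)) := by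
  have glue : ∀ ξ, ∃ c, ∀ k, ξ ∈ u k → c = h k ξ := by
    intro ξ
    by_cases hξ : ∃ k, ξ ∈ u k
    · obtain ⟨k, hk⟩ := hξ
      refine ⟨h k ξ, fun l hl => ?_⟩
      rw [hu.eq (not_disjoint_iff.2 ⟨ξ, hk, hl⟩)]
    · exact ⟨Classical.arbitrary K, fun k hk => (hξ ⟨k, hk⟩).elim⟩
  choose H hH using glue
  have hcard : #(⋃ k, u k) ≤ #K :=
    (mk_iUnion_le _).trans (mul_le_of_le (aleph0_le_mk K) le_rfl (ciSup_le' huK))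
  obtain ⟨i, hiX, hi⟩ := frequently_iff.1 (hf _ (iUnion_subset huS) hcard H) hX
  exact ⟨i, hiX, fun ξ hξ => (hi (mem_iUnion_of_mem _ hξ)).trans (hH ξ _ hξ)⟩

theorem IndepOn.exists_small_forall_eqOn [Infinite K] (hf : IndepOn f S D) {X : Set I}
    (hX : X ∈ D) (g : I → K) :
    ∃ C : Set Ξ, #C ≤ #K ∧ ∀ u ⊆ S \ C, #u ≤ #K → ∀ h : K → Ξ → K,
      ∃ i ∈ X, EqOn (fun ξ => f ξ i) (h (g i)) u := by
  have := hf.neBot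
  let bad : Set (Set Ξ) := {u | u ⊆ S ∧ #u ≤ #K ∧ ∃ h : K → Ξ → K,
    ∀ i ∈ X, ¬ EqOn (fun ξ => f ξ i) (h (g i)) u}
  obtain ⟨P, hP, hdisj, hmax⟩ := exists_pairwiseDisjoint_forall_disjoint_eq_empty bad
  have hPK : #P ≤ #K := by
    by_contra! hlt
    -- Index disjoint bad sets by `K`: on the `k`-th one follow the `k`-th row of its own bad `h`.
    obtain ⟨e⟩ := hlt.le
    choose huS huK h hh using fun k => hP (e k).2
    obtain ⟨i, hiX, hi⟩ := hf.exists_eqOn_of_pairwise_disjoint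
      (fun k l hkl => hdisj (e k).2 (e l).2 fun h => hkl (e.injective (Subtype.ext h)))
      huS huK (fun k => h k k) g hX
    exact hh (g i) i hiX hi
  refine ⟨⋃₀ P, ?_, fun u hu huK h => ?_⟩
  · rw [sUnion_eq_biUnion]
    exact (mk_biUnion_le _ P).trans
      (mul_le_of_le (aleph0_le_mk K) hPK (ciSup_le' fun u => (hP u.2).2.1))
  · by_contra! hbad
    rw [subset_sdiff] at hu
    obtain rfl : u = ∅ := hmax u ⟨hu.1, huK, h, hbad⟩ hu.2
    obtain ⟨i, hi⟩ := Filter.nonempty_of_mem hX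
    exact hbad i hi (eqOn_empty _ _)

/-- The filter to have in mind for `D'` is the one generated by the sets
`X q ∩ {i | f ξ i = g q i}`, on which the single function `f ξ` plays the role of every `g q`. -/
theorem IndepOn.exists_forall_indepOn_sdiff [Infinite K] (hf : IndepOn f S D) {Q : Type x}
    {X : Q → Set I} (hX : ∀ q, X q ∈ D) (g : Q → I → K) {τ : Cardinal.{x}} (hK : #K ≤ τ)
    (hQ : #Q ≤ τ) :
    ∃ C : Set Ξ, #C ≤ τ ∧ ∀ ξ ∈ S \ C, ∀ D' : Filter I,
      (∀ Z ∈ D', ∃ q, X q ∩ {i | f ξ i = g q i} ⊆ Z) → IndepOn f (S \ insert ξ C) D' := by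
  classical
  have hK₀ := aleph0_le_mk K
  choose C hCK hC using fun q => hf.exists_small_forall_eqOn (hX q) (g q)
  refine ⟨⋃ q, C q, (mk_iUnion_le _).trans (mul_le_of_le (hK₀.trans hK) hQ
    (ciSup_le' fun q => (hCK q).trans hK)), fun ξ hξ D' hD' s hs hsK h => ?_⟩
  refine frequently_iff.2 fun {Z} hZ => ?_
  obtain ⟨q, hq⟩ := hD' Z hZ
  have hξs : ξ ∉ s := fun h => (hs h).2 (mem_insert ξ _)
  have hins : insert ξ s ⊆ S \ C q := by
    refine insert_subset ⟨hξ.1, fun h => hξ.2 (mem_iUnion_of_mem q h)⟩ fun η hη => ?_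
    exact ⟨(hs hη).1, fun h => (hs hη).2 (mem_insert_of_mem ξ (mem_iUnion_of_mem q h))⟩
  obtain ⟨i, hi, hih⟩ := hC q _ hins
    (mk_insert_le.trans (add_le_of_le hK₀ hsK (one_le_aleph0.trans hK₀))) fun c => update h ξ c
  refine ⟨i, hq ⟨hi, by simpa using hih (mem_insert ξ s)⟩, fun η hη => ?_⟩
  simpa [ne_of_mem_of_not_mem hη hξs] using hih (mem_insert_of_mem ξ hη)

/-- The value at `ξ` of the function coded by a triple `(a, t, m)`: it is `m k` where `k` is chosen
such that the trace of `ξ` along `a` is `t k`. -/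
noncomputable def readOff (K : Type x) [Nonempty K] (ξ : Set (Set K))
    (i : (K → Set K) × (K → Set K) × (K → K)) : K :=
  i.2.2 (Classical.epsilon fun k => i.2.1 k = i.1 ⁻¹' ξ)

theorem exists_preimage_injective [Infinite K] {α : Type x} [Nonempty α] (q : K → Set α) :
    ∃ a : K → α, ∀ k l, a ⁻¹' q k = a ⁻¹' q l → q k = q l := by
  obtain ⟨pair⟩ : Nonempty (K ≃ K × K) := Cardinal.eq.1 (by simp)
  have separate : ∀ p : K × K, ∃ d, (d ∈ q p.1 ↔ d ∈ q p.2) → q p.1 = q p.2 := by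
    intro p
    by_contra! hd
    exact (hd (Classical.arbitrary α)).2 (Set.ext fun d => (hd d).1)
  choose d hd using separate
  refine ⟨d ∘ pair, fun k l hkl => hd (k, l) ?_⟩
  simpa using Set.ext_iff.1 hkl (pair.symm (k, l))

theorem indepOn_readOff (K : Type x) [Infinite K] : IndepOn (readOff K) univ ⊤ := by
  intro s _ hsK h
  rw [frequently_top]
  rcases isEmpty_or_nonempty s with hs | hs
  · exact ⟨(fun _ => ∅, fun _ => ∅, id), fun ξ hξ => hs.elim ⟨ξ, hξ⟩⟩
  obtain ⟨e⟩ := hsK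
  let q : K → s := invFun e
  obtain ⟨a, ha⟩ := exists_preimage_injective fun k => (q k : Set (Set K))
  refine ⟨(a, fun k => a ⁻¹' q k, fun k => h (q k)), fun ξ hξ => ?_⟩
  obtain ⟨k, hk⟩ := invFun_surjective e.injective ⟨ξ, hξ⟩
  have hk' : (q k : Set (Set K)) = ξ := congrArg Subtype.val hk
  have hchoice := Classical.epsilon_spec (p := fun l => a ⁻¹' (q l : Set (Set K)) = a ⁻¹' ξ)
    ⟨k, by rw [hk']⟩
  exact congrArg h ((ha _ k (by rw [hchoice, hk'])).trans hk')

theorem mk_readOff_index (K : Type x) [Infinite K] :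
    #((K → Set K) × (K → Set K) × (K → K)) = 2 ^ #K := by
  have hK : ℵ₀ ≤ #K := aleph0_le_mk K
  simp [mk_set, ← power_mul, mul_eq_self hK, power_self_eq hK,
    mul_eq_self (hK.trans (cantor _).le)]

/-- The Engelking–Karłowicz theorem. -/
theorem exists_indepOn_univ (K : Type x) [Infinite K] :
    ∃ (I : Type x) (f : Set (Set K) → I → K), #I = 2 ^ #K ∧ IndepOn f univ ⊤ :=
  ⟨_, readOff K, mk_readOff_index K, indepOn_readOff K⟩

end Independence

section Agreement

open FirstOrder.Language

variable {L : FirstOrder.Language.{u, v}} {A B I ρ σ : Type*} [L.Structure A] [L.Structure B]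

/-- The set of indices at which the families `a` and `b` of functions agree about `φ`. -/
def agreementSet (a : ρ → I → A) (b : ρ → I → B) (φ : L.Formula ρ) : Set I :=
  {i | φ.Realize (fun r => a r i) ↔ φ.Realize (fun r => b r i)}

variable (L) in
/-- The filter generated by the sets of indices at which `a` and `b` agree about a formula. -/
def agreement (a : ρ → I → A) (b : ρ → I → B) : Filter I :=
  ⨅ φ : L.Formula ρ, 𝓟 (agreementSet a b φ)

variable {a : ρ → I → A} {b : ρ → I → B}

theorem agreementSet_mem_agreement (φ : L.Formula ρ) : agreementSet a b φ ∈ agreement L a b :=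
  mem_iInf_of_mem φ (mem_principal_self _)

theorem le_agreement_iff {F : Filter I} :
    F ≤ agreement L a b ↔ ∀ φ : L.Formula ρ, agreementSet a b φ ∈ F := by
  simp only [agreement, le_iInf_iff, le_principal_iff]

theorem mem_agreement_iff {X : Set I} :
    X ∈ agreement L a b ↔ ∃ t : Finset (L.Formula ρ), ⋂ φ ∈ t, agreementSet a b φ ⊆ X := by
  simp only [agreement, mem_iInf_finite, iInf_principal_finset, mem_principal]

theorem agreementSet_comm (φ : L.Formula ρ) : agreementSet a b φ = agreementSet b a φ :=
  Set.ext fun _ => Iff.comm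

theorem agreement_comm : agreement L a b = agreement L b a :=
  iInf_congr fun φ => congrArg 𝓟 (agreementSet_comm φ)

theorem agreementSet_relabel (u : σ → ρ) (φ : L.Formula σ) :
    agreementSet a b (φ.relabel u) = agreementSet (a ∘ u) (b ∘ u) φ := by
  simp only [agreementSet, Formula.realize_relabel, comp_def]

theorem agreement_le_agreement_comp (u : σ → ρ) :
    agreement L a b ≤ agreement L (a ∘ u) (b ∘ u) :=
  le_agreement_iff.2 fun φ => by
    rw [← agreementSet_relabel]
    exact agreementSet_mem_agreement _

theorem agreementSet_mem_agreement_freeVarFinset [DecidableEq ρ] (φ : L.Formula ρ) :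
    agreementSet a b φ ∈
      agreement L (fun r : φ.freeVarFinset => a r) (fun r : φ.freeVarFinset => b r) := by
  refine mem_of_superset (agreementSet_mem_agreement (φ.restrictFreeVar id)) fun i hi => ?_
  simp only [agreementSet, Formula.Realize] at hi ⊢
  rwa [mem_ofPred_eq, BoundedFormula.realize_restrictFreeVar (fun r => a r i) fun _ => rfl,
    BoundedFormula.realize_restrictFreeVar (fun r => b r i) fun _ => rfl] at hi

theorem exists_finset_mem_agreement {X : Set I} (hX : X ∈ agreement L a b) :
    ∃ t : Finset ρ, X ∈ agreement L (fun r : t => a r) (fun r : t => b r) := by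
  classical
  obtain ⟨Φ, hΦ⟩ := mem_agreement_iff.1 hX
  refine ⟨Φ.biUnion fun φ => φ.freeVarFinset, mem_of_superset ?_ hΦ⟩
  refine (biInter_finset_mem Φ).2 fun φ hφ => ?_
  exact agreement_le_agreement_comp
    (inclusion (Finset.subset_biUnion_of_mem (fun φ : L.Formula ρ => φ.freeVarFinset) hφ))
    (agreementSet_mem_agreement_freeVarFinset φ)

/-- A finite form of the back-and-forth step: `Ψ` consists of the formulas saying that some element
has a prescribed type among the finitely many types given by truth values of the formulas in
`Φ`. -/
theorem exists_finset_forall_exists_realize_iff (Φ : Finset (L.Formula (ρ ⊕ Unit))) :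
    ∃ Ψ : Finset (L.Formula ρ), ∀ (v : ρ → A) (w : ρ → B),
      (∀ ψ ∈ Ψ, ψ.Realize v ↔ ψ.Realize w) → ∀ x : A, ∃ y : B, ∀ φ ∈ Φ,
        φ.Realize (Sum.elim v fun _ => x) ↔ φ.Realize (Sum.elim w fun _ => y) := by
  classical
  let χ (T : Finset (L.Formula (ρ ⊕ Unit))) : L.Formula ρ :=
    (Formula.iInf fun φ : Φ => if φ.1 ∈ T then φ.1 else ∼φ.1).iExs Unit
  refine ⟨Φ.powerset.image χ, fun v w hvw x => ?_⟩
  let T := Φ.filter fun φ => φ.Realize (Sum.elim v fun _ => x)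
  have hv : (χ T).Realize v := by
    refine Formula.realize_iExs.2 ⟨fun _ => x, Formula.realize_iInf.2 fun φ => ?_⟩
    by_cases hφ : φ.1.Realize (Sum.elim v fun _ => x) <;> simp [T, hφ]
  have hT : χ T ∈ Φ.powerset.image χ :=
    Finset.mem_image_of_mem χ (Finset.mem_powerset.2 (Finset.filter_subset _ Φ))
  obtain ⟨y, hy⟩ := Formula.realize_iExs.1 ((hvw _ hT).1 hv)
  refine ⟨y (), fun φ hφ => ?_⟩
  have hyφ := Formula.realize_iInf.1 hy ⟨φ, hφ⟩
  by_cases hx : φ.Realize (Sum.elim v fun _ => x)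
  · exact iff_of_true hx (by simpa [T, hφ, hx] using hyφ)
  · exact iff_of_false hx (by simpa [T, hφ, hx] using hyφ)

/-- The family `a` with the further member `a'`. -/
def adjoin (a : ρ → I → A) (a' : I → A) : ρ ⊕ Unit → I → A :=
  Sum.elim a fun _ => a'

theorem adjoin_apply (a : ρ → I → A) (a' : I → A) (i : I) :
    (fun r => adjoin a a' r i) = Sum.elim (fun r => a r i) fun _ => a' i :=
  funext (by rintro (r | _) <;> rfl)

theorem exists_iInter_agreementSet_adjoin_mem [Nonempty B] (a' : I → A)
    (Φ : Finset (L.Formula (ρ ⊕ Unit))) :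
    ∃ g : I → B, ⋂ φ ∈ Φ, agreementSet (adjoin a a') (adjoin b g) φ ∈ agreement L a b := by
  obtain ⟨Ψ, hΨ⟩ := exists_finset_forall_exists_realize_iff (A := A) (B := B) Φ
  refine ⟨fun i => Classical.epsilon fun y => ∀ φ ∈ Φ,
    φ.Realize (Sum.elim (fun r => a r i) fun _ => a' i) ↔
      φ.Realize (Sum.elim (fun r => b r i) fun _ => y), mem_agreement_iff.2 ⟨Ψ, fun i hi => ?_⟩⟩
  simp only [mem_iInter₂, agreementSet, mem_ofPred_eq, adjoin_apply] at hi ⊢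
  exact Classical.epsilon_spec (hΨ _ _ hi (a' i))

theorem IndepOn.exists_adjoin {ρ I Ξ K : Type (max u v x)} {a : ρ → I → A} {b : ρ → I → B}
    {f : Ξ → I → K} [Infinite K] [Nonempty B] {C : Set Ξ}
    (hf : IndepOn f Cᶜ (agreement L a b)) (ι : B ↪ K) {τ : Cardinal.{max u v x}} (hK : #K ≤ τ)
    (hC : #C ≤ τ) (hτ : τ < #Ξ) (hL : #(Finset (L.Formula (ρ ⊕ Unit))) ≤ τ) (a' : I → A) :
    ∃ C' : Set Ξ, #C' ≤ τ ∧ ∃ b' : I → B,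
      IndepOn f (C ∪ C')ᶜ (agreement L (adjoin a a') (adjoin b b')) := by
  have hτ₀ := (aleph0_le_mk K).trans hK
  choose g hg using exists_iInter_agreementSet_adjoin_mem (L := L) (a := a) (b := b) a'
  obtain ⟨C', hC', hforce⟩ := hf.exists_forall_indepOn_sdiff hg (fun Φ i => ι (g Φ i)) hK hL
  obtain ⟨ξ, hξ⟩ : ∃ ξ, ξ ∉ C ∪ C' := by
    by_contra! hall
    have hunion : #(C ∪ C' : Set Ξ) ≤ τ := (mk_union_le C C').trans (add_le_of_le hτ₀ hC hC')
    rw [eq_univ_of_forall hall, mk_univ] at hunion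
    exact hτ.not_ge hunion
  rw [mem_union, not_or] at hξ
  refine ⟨insert ξ C', mk_insert_le.trans (add_le_of_le hτ₀ hC' (one_le_aleph0.trans hτ₀)),
    fun i => invFun ι (f ξ i), ?_⟩
  rw [compl_union, ← sdiff_eq]
  refine hforce ξ hξ _ fun Z hZ => ?_
  obtain ⟨Φ, hΦ⟩ := mem_agreement_iff.1 hZ
  refine ⟨Φ, Subset.trans ?_ hΦ⟩
  rintro i ⟨hi, hiξ : f ξ i = ι (g Φ i)⟩
  have hg' : invFun ι (f ξ i) = g Φ i := by rw [hiξ, leftInverse_invFun ι.injective]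
  simpa only [mem_iInter₂, agreementSet, mem_ofPred_eq, adjoin_apply, hg'] using hi

end Agreement

section Admissible

open FirstOrder.Language

variable {L : FirstOrder.Language.{u, v}} {A B : Type w} [L.Structure A] [L.Structure B]

theorem mk_finset_le {α : Type x} {τ : Cardinal.{x}} (hτ : ℵ₀ ≤ τ) (hα : #α ≤ τ) :
    #(Finset α) ≤ τ := by
  cases finite_or_infinite α
  · exact mk_le_aleph0.trans hτ
  · rwa [mk_finset_of_infinite]

theorem mk_formula_le {α : Type (max u v x)} {τ : Cardinal.{max u v x}} (hτ : ℵ₀ ≤ τ)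
    (hα : #α ≤ τ) (hL : lift.{x} L.card ≤ τ) : #(L.Formula α) ≤ τ := by
  have hle := (mk_le_of_injective (f := Sigma.mk (β := L.BoundedFormula α) 0)
    sigma_mk_injective).trans BoundedFormula.card_le
  rw [lift_id'.{max u v, max u v x}, lift_umax.{max u v, x}] at hle
  exact hle.trans (max_le hτ (add_le_of_le hτ hα hL))

theorem mk_finset_formula_sum_unit_le {ρ : Type (max u v x)} {τ : Cardinal.{max u v x}}
    (hτ : ℵ₀ ≤ τ) (hρ : #ρ ≤ τ) (hL : lift.{x} L.card ≤ τ) :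
    #(Finset (L.Formula (ρ ⊕ Unit))) ≤ τ := by
  refine mk_finset_le hτ (mk_formula_le.{u, v, x} hτ ?_ hL)
  simpa using add_le_of_le hτ hρ (one_le_aleph0.trans hτ)

theorem agreement_eq_top_of_isEmpty {ρ I : Type*} [IsEmpty ρ] (h : A ≅[L] B) (a : ρ → I → A)
    (b : ρ → I → B) : agreement L a b = ⊤ := by
  refine top_le_iff.1 (le_agreement_iff.2 fun φ => univ_mem' fun i => ?_)
  have hφ := elementarilyEquivalent_iff.1 h (φ.relabel isEmptyElim)
  simp only [Sentence.Realize, Formula.realize_relabel] at hφ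
  simp only [agreementSet, mem_ofPred_eq]
  convert hφ

theorem IndepOn.mono {I Ξ K : Type x} {f : Ξ → I → K} {S S' : Set Ξ} {D D' : Filter I}
    (hf : IndepOn f S D) (hS : S' ⊆ S) (hD : D ≤ D') : IndepOn f S' D' :=
  fun s hs hsK h => (hf s (hs.trans hS) hsK h).filter_mono hD

variable (L) in
/-- The agreement filter of the two coordinate projections on a set `R` of pairs of functions. -/
def pairAgreement {I : Type*} (R : Set ((I → A) × (I → B))) : Filter I :=
  agreement L (fun p : R => p.1.1) fun p : R => p.1.2

theorem pairAgreement_anti {I : Type*} {R R' : Set ((I → A) × (I → B))} (h : R' ⊆ R) :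
    pairAgreement L R ≤ pairAgreement L R' :=
  agreement_le_agreement_comp (inclusion h)

theorem exists_finite_mem_pairAgreement {I : Type*} {R : Set ((I → A) × (I → B))} {X : Set I}
    (hX : X ∈ pairAgreement L R) : ∃ R' ⊆ R, R'.Finite ∧ X ∈ pairAgreement L R' := by
  obtain ⟨t, ht⟩ := exists_finset_mem_agreement hX
  refine ⟨Subtype.val '' (t : Set R), Subtype.coe_image_subset R _, t.finite_toSet.image _, ?_⟩
  exact agreement_le_agreement_comp
    (fun r : t => (⟨r.1.1, mem_image_of_mem _ r.2⟩ : Subtype.val '' (t : Set R))) ht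

theorem agreement_adjoin_le_pairAgreement {I : Type*} (R : Set ((I → A) × (I → B))) (a : I → A)
    (b : I → B) :
    agreement L (adjoin (fun p : R => p.1.1) a) (adjoin (fun p : R => p.1.2) b) ≤
      pairAgreement L (insert (a, b) R) := by
  have hmem : ∀ p : ↥(insert (a, b) R), ∃ r : R ⊕ Unit,
      adjoin (fun p : R => p.1.1) a r = p.1.1 ∧ adjoin (fun p : R => p.1.2) b r = p.1.2 := by
    rintro ⟨p, rfl | hp⟩
    exacts [⟨Sum.inr (), rfl, rfl⟩, ⟨Sum.inl ⟨p, hp⟩, rfl, rfl⟩]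
  choose r hra hrb using hmem
  refine (agreement_le_agreement_comp r).trans_eq ?_
  rw [pairAgreement, ← funext hra, ← funext hrb]
  rfl

variable {I Ξ K : Type (max u v w)} {f : Ξ → I → K}

variable (L) in
/-- A stage of the construction records the pairs of functions to be identified in the ultrapowers
and the members of the independent family used up so far. It is admissible if the remaining
members are independent over the agreement filter of the recorded pairs. -/
def Admissible (f : Ξ → I → K) (s : Set ((I → A) × (I → B) ⊕ Ξ)) : Prop :=
  IndepOn f (Sum.inr ⁻¹' s)ᶜ (pairAgreement L (Sum.inl ⁻¹' s))

theorem admissible_empty (h : A ≅[L] B) (hf : IndepOn f univ ⊤) :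
    Admissible L f (∅ : Set ((I → A) × (I → B) ⊕ Ξ)) := by
  have : IsEmpty ↥(Sum.inl ⁻¹' (∅ : Set ((I → A) × (I → B) ⊕ Ξ))) := ⟨fun p => p.2⟩
  rw [Admissible, pairAgreement, agreement_eq_top_of_isEmpty h]
  exact hf.mono (subset_univ _) le_rfl

theorem admissible_sUnion {c : Set (Set ((I → A) × (I → B) ⊕ Ξ))} (hne : c.Nonempty)
    (hchain : IsChain (· ⊆ ·) c) (hc : ∀ s ∈ c, Admissible L f s) : Admissible L f (⋃₀ c) := by
  intro s hs hsK h
  refine frequently_iff.2 fun {X} hX => ?_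
  obtain ⟨R, hR, hRfin, hXR⟩ := exists_finite_mem_pairAgreement hX
  obtain ⟨s', hs'c, hRs'⟩ := hchain.directedOn.exists_mem_subset_of_finite_of_subset_sUnion hne
    (hRfin.image Sum.inl) (image_subset_iff.2 hR)
  refine frequently_iff.1 (hc s' hs'c s (hs.trans ?_) hsK h)
    (pairAgreement_anti (image_subset_iff.1 hRs') hXR)
  exact compl_subset_compl.2 (preimage_mono (subset_sUnion_of_mem hs'c))

theorem exists_admissible_of_indepOn_adjoin {s : Set ((I → A) × (I → B) ⊕ Ξ)} {C : Set Ξ}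
    {a : I → A} {b : I → B} {τ : Cardinal.{max u v w}} (hτ : ℵ₀ ≤ τ) (hs : #s ≤ τ) (hC : #C ≤ τ)
    (hf : IndepOn f (Sum.inr ⁻¹' s ∪ C)ᶜ (agreement L
      (adjoin (fun p : Sum.inl ⁻¹' s => p.1.1) a) (adjoin (fun p : Sum.inl ⁻¹' s => p.1.2) b))) :
    ∃ t, s ⊆ t ∧ Admissible L f t ∧ Sum.inl (a, b) ∈ t ∧ #t ≤ τ := by
  refine ⟨insert (Sum.inl (a, b)) (s ∪ Sum.inr '' C),
    subset_union_left.trans (subset_insert _ _), ?_, mem_insert _ _, ?_⟩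
  · refine hf.mono ?_ ((agreement_adjoin_le_pairAgreement _ a b).trans (pairAgreement_anti ?_))
    · exact compl_subset_compl.2 fun ξ => by simp
    · exact fun p => by simp
  · exact mk_insert_le.trans (add_le_of_le hτ ((mk_union_le _ _).trans
      (add_le_of_le hτ hs (mk_image_le.trans hC))) (one_le_aleph0.trans hτ))

theorem Admissible.exists_extension_left [Infinite K] [Nonempty B]
    {s : Set ((I → A) × (I → B) ⊕ Ξ)} (hs : Admissible L f s) (ι : B ↪ K)
    (hL : lift.{w} L.card ≤ #K) (hsΞ : max #K #s < #Ξ) (a : I → A) :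
    ∃ b t, s ⊆ t ∧ Admissible L f t ∧ Sum.inl (a, b) ∈ t ∧ #t ≤ max #K #s := by
  have hK : #K ≤ max #K #s := le_max_left _ _
  have hτ := (aleph0_le_mk K).trans hK
  have hs' : #s ≤ max #K #s := le_max_right _ _
  obtain ⟨C, hC, b, hf⟩ := IndepOn.exists_adjoin.{u, v, w} hs ι hK
    ((mk_preimage_of_injective _ s Sum.inr_injective).trans hs') hsΞ
    (mk_finset_formula_sum_unit_le.{u, v, w} hτ
      ((mk_preimage_of_injective _ s Sum.inl_injective).trans hs') (hL.trans hK)) a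
  exact ⟨b, exists_admissible_of_indepOn_adjoin hτ hs' hC hf⟩

theorem Admissible.exists_extension_right [Infinite K] [Nonempty A]
    {s : Set ((I → A) × (I → B) ⊕ Ξ)} (hs : Admissible L f s) (ι : A ↪ K)
    (hL : lift.{w} L.card ≤ #K) (hsΞ : max #K #s < #Ξ) (b : I → B) :
    ∃ a t, s ⊆ t ∧ Admissible L f t ∧ Sum.inl (a, b) ∈ t ∧ #t ≤ max #K #s := by
  have hK : #K ≤ max #K #s := le_max_left _ _
  have hτ := (aleph0_le_mk K).trans hK
  have hs' : #s ≤ max #K #s := le_max_right _ _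
  rw [Admissible, pairAgreement, agreement_comm] at hs
  obtain ⟨C, hC, a, hf⟩ := IndepOn.exists_adjoin.{u, v, w} hs ι hK
    ((mk_preimage_of_injective _ s Sum.inr_injective).trans hs') hsΞ
    (mk_finset_formula_sum_unit_le.{u, v, w} hτ
      ((mk_preimage_of_injective _ s Sum.inl_injective).trans hs') (hL.trans hK)) b
  rw [agreement_comm] at hf
  exact ⟨a, exists_admissible_of_indepOn_adjoin hτ hs' hC hf⟩

theorem exists_neBot_pairAgreement [Infinite K] (h : A ≅[L] B) (hf : IndepOn f univ ⊤)
    (ιA : A ↪ K) (ιB : B ↪ K) (hL : lift.{w} L.card ≤ #K) (hKΞ : #K < #Ξ)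
    (hA : #(I → A) ≤ #Ξ) (hB : #(I → B) ≤ #Ξ) :
    ∃ R : Set ((I → A) × (I → B)), (pairAgreement L R).NeBot ∧
      (∀ a, ∃ b, (a, b) ∈ R) ∧ ∀ b, ∃ a, (a, b) ∈ R := by
  have hK := aleph0_le_mk K
  have : Nonempty I := by
    have := hf.neBot
    exact nonempty_of_neBot (⊤ : Filter I)
  let goal : (I → A) ⊕ (I → B) → Set ((I → A) × (I → B) ⊕ Ξ) := Sum.elim
    (fun a => range fun b => Sum.inl (a, b)) fun b => range fun a => Sum.inl (a, b)
  obtain ⟨s, hs, hgoal⟩ : ∃ s, Admissible L f s ∧ ∀ j, (s ∩ goal j).Nonempty := by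
    refine exists_good_forall_goal hK hKΞ ?_ (fun c hchain hc => ?_) fun s hs hsΞ j => ?_
    · simpa using add_le_of_le (hK.trans hKΞ.le) hA hB
    · rcases c.eq_empty_or_nonempty with rfl | hne
      · simpa using admissible_empty h hf
      · exact admissible_sUnion hne hchain hc
    · rcases j with a | b
      · have : Nonempty B := h.nonempty_iff.1 ((nonempty_fun.1 ⟨a⟩).resolve_left (by simp))
        obtain ⟨b, t, hst, ht, hab, htK⟩ := hs.exists_extension_left ιB hL (max_lt hKΞ hsΞ) a
        exact ⟨t, hst, ht, ⟨_, hab, b, rfl⟩, htK⟩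
      · have : Nonempty A := h.nonempty_iff.2 ((nonempty_fun.1 ⟨b⟩).resolve_left (by simp))
        obtain ⟨a, t, hst, ht, hab, htK⟩ := hs.exists_extension_right ιA hL (max_lt hKΞ hsΞ) b
        exact ⟨t, hst, ht, ⟨_, hab, a, rfl⟩, htK⟩
  refine ⟨Sum.inl ⁻¹' s, hs.neBot, fun a => ?_, fun b => ?_⟩
  · obtain ⟨_, hab, b, rfl⟩ := hgoal (Sum.inl a)
    exact ⟨b, hab⟩
  · obtain ⟨_, hab, a, rfl⟩ := hgoal (Sum.inr b)
    exact ⟨a, hab⟩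

end Admissible

section Ultrapower

open FirstOrder.Language

variable {L : FirstOrder.Language.{u, v}} {I : Type*} {A B : Type*} [L.Structure A] [L.Structure B]
  {U : Ultrafilter I}

/-- The ultrapower of `A` by `U`, as the product of the constant family `A`. -/
abbrev Ultrapower (U : Ultrafilter I) (A : Type*) : Type _ :=
  (U : Filter I).Product fun _ => A

/-- The element of the ultrapower represented by a function. -/
def Ultrapower.mk (U : Ultrafilter I) (a : I → A) : Ultrapower U A :=
  a

namespace Ultrapower

theorem mk_surjective : Surjective (mk (A := A) U) :=
  Quotient.mk_surjective

theorem funMap_mk {n : ℕ} (g : L.Functions n) (a : Fin n → I → A) :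
    (Structure.funMap g fun k => mk U (a k)) = mk U fun i => Structure.funMap g fun k => a k i :=
  Ultraproduct.funMap_cast g a

theorem relMap_mk {n : ℕ} (r : L.Relations n) (a : Fin n → I → A) :
    (Structure.RelMap r fun k => mk U (a k)) ↔
      ∀ᶠ i in U, Structure.RelMap r fun k => a k i :=
  relMap_quotient_mk' ((U : Filter I).productSetoid fun _ => A) r a

theorem isEmpty [IsEmpty A] : IsEmpty (Ultrapower U A) :=
  ⟨fun x => by
    obtain ⟨a, -⟩ := mk_surjective x
    exact (nonempty_of_neBot (U : Filter I)).elim fun i => isEmptyElim (a i)⟩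

/-- The empty structure is its own ultrapower by any ultrafilter. -/
def equivOfIsEmpty (U : Ultrafilter I) [IsEmpty A] : A ≃[L] Ultrapower U A where
  toFun := fun a => mk U fun _ => a
  invFun := fun x => (isEmpty (U := U) (A := A)).elim x
  left_inv := isEmptyElim
  right_inv := fun x => (isEmpty (U := U) (A := A)).elim x
  map_fun' := fun g x => by
    rw [comp_def, funMap_mk]
  map_rel' := fun r x => by
    rw [comp_def, relMap_mk, eventually_const]

theorem realize_formula {ρ : Type*} (φ : L.Formula ρ) (a : ρ → I → A) :
    (φ.Realize fun r => mk U (a r)) ↔ ∀ᶠ i in U, φ.Realize fun r => a r i := by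
  cases isEmpty_or_nonempty A
  · have hI := nonempty_of_neBot (U : Filter I)
    have : IsEmpty ρ := ⟨fun r => isEmptyElim (a r hI.some)⟩
    have hφ := StrongHomClass.realize_formula (equivOfIsEmpty (L := L) (A := A) U) φ
      (v := isEmptyElim)
    have hconst : ∀ i, (fun r => a r i) = isEmptyElim := fun i => Subsingleton.elim _ _
    simp only [hconst, eventually_const]
    convert hφ
  · exact Ultraproduct.realize_formula_cast φ a

theorem elementarilyEquivalent (U : Ultrafilter I) (A : Type*) [L.Structure A] :
    Ultrapower U A ≅[L] A := by
  refine elementarilyEquivalent_iff.2 fun φ => ?_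
  have h := realize_formula (U := U) φ fun (e : Empty) (_ : I) => (e.elim : A)
  rw [eventually_const] at h
  simp only [Sentence.Realize]
  convert h

end Ultrapower

theorem nonempty_equiv_of_surjective {ρ X Y : Type*} [L.Structure X] [L.Structure Y] {x : ρ → X}
    {y : ρ → Y} (hx : Surjective x) (hy : Surjective y)
    (hxy : ∀ φ : L.Formula ρ, φ.Realize x ↔ φ.Realize y) : Nonempty (X ≃[L] Y) := by
  choose c hc using hx
  have hF : ∀ r, y (c (x r)) = y r := fun r => by
    simpa [hc] using hxy (Term.equal (Term.var (c (x r))) (Term.var r))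
  have hinj : Injective (y ∘ c) := fun z z' hzz' => by
    simpa [hc] using (hxy (Term.equal (Term.var (c z)) (Term.var (c z')))).2 (by simpa using hzz')
  refine ⟨⟨Equiv.ofBijective (y ∘ c) ⟨hinj, fun z => ?_⟩, fun g z => ?_, fun r z => ?_⟩⟩
  · obtain ⟨r, rfl⟩ := hy z
    exact ⟨x r, hF r⟩
  · have h := (hxy (Term.equal (Term.var (c (Structure.funMap g z)))
      (Term.func g fun k => Term.var (c (z k))))).1 (by simp [hc])
    simp only [Formula.realize_equal, Term.realize_var, Term.realize_func] at h
    exact h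
  · have h := hxy (r.formula fun k => Term.var (c (z k)))
    simp only [Formula.realize_rel, Term.realize_var, hc] at h
    exact h.symm

theorem nonempty_ultrapower_equiv {ρ : Type*} {a : ρ → I → A} {b : ρ → I → B}
    (hU : (U : Filter I) ≤ agreement L a b) (ha : Surjective a) (hb : Surjective b) :
    Nonempty (Ultrapower U A ≃[L] Ultrapower U B) := by
  refine nonempty_equiv_of_surjective (Ultrapower.mk_surjective.comp ha)
    (Ultrapower.mk_surjective.comp hb) fun φ => ?_
  exact (Ultrapower.realize_formula φ a).trans
    ((eventually_congr (le_agreement_iff.1 hU φ)).trans (Ultrapower.realize_formula φ b).symm)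

end Ultrapower

section KeislerShelah

open FirstOrder.Language

variable {L : FirstOrder.Language.{u, v}}

theorem mk_fun_le_of_embedding {A : Type w} {I K : Type (max w x)} [Infinite K]
    (hI : #I = 2 ^ #K) (ι : A ↪ K) : #(I → A) ≤ #(Set (Set K)) := by
  have h₂ : ℵ₀ ≤ (2 : Cardinal.{max w x}) ^ #K := (aleph0_le_mk K).trans (cantor _).le
  refine (mk_le_of_injective ι.injective.comp_left).trans ?_
  rw [← power_def, hI, mk_set, mk_set, ← power_self_eq h₂]
  exact power_le_power_right (cantor _).le

/-- The Keisler–Shelah isomorphism theorem. -/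
theorem elementarilyEquivalent_iff_exists_ultrapower_equiv {A B : Type w} [L.Structure A]
    [L.Structure B] :
    (A ≅[L] B) ↔ ∃ (I : Type (max u v w)) (U : Ultrafilter I),
      Nonempty (Ultrapower U A ≃[L] Ultrapower U B) := by
  constructor
  · intro h
    let K : Type (max u v w) := (A ⊕ B) ⊕ L.Symbols ⊕ ℕ
    have : Infinite K := inferInstanceAs (Infinite ((A ⊕ B) ⊕ L.Symbols ⊕ ℕ))
    let ιA : A ↪ K := Embedding.inl.trans Embedding.inl
    let ιB : B ↪ K := Embedding.inr.trans Embedding.inl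
    let ιL : L.Symbols ↪ K := Embedding.inl.trans Embedding.inr
    have hL : lift.{w} L.card ≤ #K := by
      have h := lift_mk_le_lift_mk_of_injective ιL.injective
      rwa [lift_id'.{max u v, max u v w}, lift_umax.{max u v, w}] at h
    have hKΞ : #K < #(Set (Set K)) := by
      rw [mk_set, mk_set]
      exact (cantor _).trans (cantor _)
    obtain ⟨I, f, hI, hf⟩ := exists_indepOn_univ K
    obtain ⟨R, hR, hRA, hRB⟩ := exists_neBot_pairAgreement.{u, v, w} h hf ιA ιB
      hL hKΞ (mk_fun_le_of_embedding.{w, max u v} hI ιA)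
      (mk_fun_le_of_embedding.{w, max u v} hI ιB)
    refine ⟨I, Ultrafilter.of (pairAgreement L R), ?_⟩
    refine nonempty_ultrapower_equiv (Ultrafilter.of_le _) (fun a => ?_) fun b => ?_
    · obtain ⟨b, hab⟩ := hRA a
      exact ⟨⟨_, hab⟩, rfl⟩
    · obtain ⟨a, hab⟩ := hRB b
      exact ⟨⟨_, hab⟩, rfl⟩
  · rintro ⟨I, U, ⟨j⟩⟩
    exact (Ultrapower.elementarilyEquivalent U A).symm.trans
      ((StrongHomClass.elementarilyEquivalent j).trans (Ultrapower.elementarilyEquivalent U B))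

end KeislerShelah

section Constants

open FirstOrder.Language

variable {L : FirstOrder.Language.{u, v}} {α X Y : Type*} [L.Structure X] [L.Structure Y]
  [L[[α]].Structure X] [L[[α]].Structure Y] [(L.lhomWithConstants α).IsExpansionOn X]
  [(L.lhomWithConstants α).IsExpansionOn Y]

theorem nonempty_equiv_withConstants_iff :
    Nonempty (X ≃[L[[α]]] Y) ↔
      ∃ j : X ≃[L] Y, ∀ a : α, j ((L.con a : L[[α]].Constants) : X) =
        ((L.con a : L[[α]].Constants) : Y) := by
  constructor
  · rintro ⟨j⟩
    refine ⟨⟨j.toEquiv, fun g x => ?_, fun r x => ?_⟩, fun a => j.map_constants (L.con a)⟩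
    · rw [← (L.lhomWithConstants α).map_onFunction, ← (L.lhomWithConstants α).map_onFunction]
      exact j.map_fun _ x
    · rw [← (L.lhomWithConstants α).map_onRelation, ← (L.lhomWithConstants α).map_onRelation]
      exact j.map_rel _ x
  · rintro ⟨j, hj⟩
    refine ⟨⟨j.toEquiv, fun {n} g x => ?_, fun {n} r x => ?_⟩⟩
    · rcases g with g | c
      · change j (Structure.funMap ((L.lhomWithConstants α).onFunction g) x) =
          Structure.funMap ((L.lhomWithConstants α).onFunction g) (j ∘ x)
        rw [LHom.map_onFunction, LHom.map_onFunction]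
        exact j.map_fun g x
      · cases n with
        | zero =>
          change j (Structure.funMap (L.con (α := α) c) x) =
            Structure.funMap (L.con (α := α) c) (j ∘ x)
          rw [funMap_eq_coe_constants, funMap_eq_coe_constants]
          exact hj c
        | succ n => exact isEmptyElim (α := (constantsOn α).Functions (n + 1)) c
    · rcases r with r | r
      · change Structure.RelMap ((L.lhomWithConstants α).onRelation r) (j ∘ x) ↔
          Structure.RelMap ((L.lhomWithConstants α).onRelation r) x
        rw [LHom.map_onRelation, LHom.map_onRelation]
        exact j.map_rel r x
      · exact isEmptyElim (α := (constantsOn α).Relations n) r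

instance {I : Type*} (U : Ultrafilter I) :
    (L.lhomWithConstants α).IsExpansionOn (Ultrapower U X) where
  map_onFunction g x := by
    choose a ha using fun k => Ultrapower.mk_surjective (x k)
    obtain rfl := funext ha
    rw [Ultrapower.funMap_mk, Ultrapower.funMap_mk]
    simp only [LHom.map_onFunction]
  map_onRelation r x := by
    choose a ha using fun k => Ultrapower.mk_surjective (x k)
    obtain rfl := funext ha
    rw [eq_iff_iff, Ultrapower.relMap_mk, Ultrapower.relMap_mk]
    simp only [LHom.map_onRelation]

theorem Ultrapower.coe_constants {I : Type*} (U : Ultrafilter I) (c : L.Constants) :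
    (c : Ultrapower U X) = Ultrapower.mk U fun _ => (c : X) :=
  (funMap_eq_coe_constants (x := fun k => mk U (isEmptyElim k))).symm.trans
    ((Ultrapower.funMap_mk c _).trans (congrArg _ (funext fun _ => funMap_eq_coe_constants)))

theorem Ultrapower.nonempty_equiv_withConstants_iff {I : Type*} (U : Ultrafilter I) :
    Nonempty (Ultrapower U X ≃[L[[α]]] Ultrapower U Y) ↔
      ∃ j : Ultrapower U X ≃[L] Ultrapower U Y, ∀ a : α,
        j (mk U fun _ => ((L.con a : L[[α]].Constants) : X)) =
          mk U fun _ => ((L.con a : L[[α]].Constants) : Y) := by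
  simp only [KeislerShelah.nonempty_equiv_withConstants_iff, coe_constants]

variable {M : Type w} [L.Structure M] (S : L.Substructure M)

instance : (constantsOn S).Structure M :=
  constantsOn.structure (↑)

theorem isElementary_iff_elementarilyEquivalent : S.IsElementary ↔ S ≅[L[[S]]] M := by
  constructor
  · intro hS
    refine elementarilyEquivalent_iff.2 fun φ => ?_
    rw [← Formula.realize_equivSentence_symm_con S, ← Formula.realize_equivSentence_symm_con M]
    exact ((⟨S, hS⟩ : L.ElementarySubstructure M).subtype.map_formula _ _).symm
  · intro h n φ x
    have hx := elementarilyEquivalent_iff.1 h (Formula.equivSentence (φ.relabel x))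
    rw [Formula.realize_equivSentence, Formula.realize_equivSentence, Formula.realize_relabel,
      Formula.realize_relabel] at hx
    exact hx.symm

end Constants

end KeislerShelah

theorem stmt_15 {L : FirstOrder.Language.{u, v}} {M : Type w} [L.Structure M]
    (S : L.Substructure M) :
    S.IsElementary ↔
      ∃ (I : Type (max u v w)) (U : Ultrafilter I)
        (j : ((U : Filter I).Product fun _ : I => ↥S) ≃[L]
             ((U : Filter I).Product fun _ : I => M)),
        ∀ a : ↥S,
          j (↑(fun _ : I => a) : (U : Filter I).Product fun _ : I => ↥S) =
            (↑(fun _ : I => (a : M)) : (U : Filter I).Product fun _ : I => M) := by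
  rw [KeislerShelah.isElementary_iff_elementarilyEquivalent,
    KeislerShelah.elementarilyEquivalent_iff_exists_ultrapower_equiv]
  exact exists_congr fun I => exists_congr fun U =>
    KeislerShelah.Ultrapower.nonempty_equiv_withConstants_iff U
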